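/- arXiv:1906.05417 — 3 statements merged into one kernel-verified Lean document; each statement's English description precedes it below -/
import Mathlib

section
/- Let S be a nonempty type, F the free group on S, and H the subgroup of F generated by the set of all products of two generators {of s * of t : s, t ∈ S}. Then H equals the kernel of the word-length-parity homomorphism φ : F → Multiplicative (ZMod 2), i.e. H consists exactly of those elements of F whose reduced word has even length. (In particular, every word of length 2 over S ∪ S⁻¹, and hence every even-length word, is a product of positive length-2 words and their inverses.) -/
/-!
Write `H` for the subgroup generated by the products of two generators. Each such product has
even parity, so `H ≤ ker φ`. Conversely, `H` has at most two cosets: by induction on words, every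
`x` satisfies `x ∈ H` or `of s * x ∈ H` for all `s` (`mem_or_forall_of_mul_mem`). For `x ∈ ker φ`
the second alternative would put a generator in `ker φ`, which is absurd.
-/

/-- Every element of the free group either lies in the subgroup generated by the positive words of
length two, or is moved into it by left multiplication by any generator. Prepending a letter to a
word exchanges the two alternatives, because `s⁻¹ y = (s s)⁻¹ (s y)` and
`t s⁻¹ y = (t s) (s s)⁻¹ y`. -/
theorem mem_or_forall_of_mul_mem {S : Type*} (x : FreeGroup S) :
    x ∈ Subgroup.closure {x : FreeGroup S | ∃ s t : S, x = FreeGroup.of s * FreeGroup.of t} ∨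
      ∀ s : S, FreeGroup.of s * x ∈
        Subgroup.closure {x : FreeGroup S | ∃ s t : S, x = FreeGroup.of s * FreeGroup.of t} := by
  set H := Subgroup.closure {x : FreeGroup S | ∃ s t : S, x = FreeGroup.of s * FreeGroup.of t}
  have pair_mem (s t : S) : FreeGroup.of s * FreeGroup.of t ∈ H :=
    Subgroup.subset_closure ⟨s, t, rfl⟩
  have hx : x ∈ Subgroup.closure (Set.range (FreeGroup.of : S → FreeGroup S)) := by
    rw [FreeGroup.closure_range_of]
    exact Subgroup.mem_top x
  induction hx using Subgroup.closure_induction_left with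
  | one => exact Or.inl H.one_mem
  | mul_left a ha y _ ih =>
    obtain ⟨s, rfl⟩ := ha
    rcases ih with hy | hy
    · refine Or.inr fun t => ?_
      rw [← mul_assoc]
      exact H.mul_mem (pair_mem t s) hy
    · exact Or.inl (hy s)
  | inv_mul_cancel a ha y _ ih =>
    obtain ⟨s, rfl⟩ := ha
    rcases ih with hy | hy
    · refine Or.inr fun t => ?_
      have h := H.mul_mem (H.mul_mem (pair_mem t s) (H.inv_mem (pair_mem s s))) hy
      convert h using 1
      group
    · left
      have h := H.mul_mem (H.inv_mem (pair_mem s s)) (hy s)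
      convert h using 1
      group

/-- The subgroup of a free group generated by all products of two generators
equals the kernel of the word-length-parity homomorphism. -/
theorem even_length_subgroup_eq_parity_ker (S : Type*) [Nonempty S] :
    Subgroup.closure {x : FreeGroup S | ∃ s t : S, x = FreeGroup.of s * FreeGroup.of t} =
      (FreeGroup.lift (fun _ : S => Multiplicative.ofAdd (1 : ZMod 2))).ker := by
  have hle : Subgroup.closure
        {x : FreeGroup S | ∃ s t : S, x = FreeGroup.of s * FreeGroup.of t} ≤
      (FreeGroup.lift (fun _ : S => Multiplicative.ofAdd (1 : ZMod 2))).ker := by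
    rw [Subgroup.closure_le]
    rintro _ ⟨s, t, rfl⟩
    rw [SetLike.mem_coe, MonoidHom.mem_ker, map_mul, FreeGroup.lift_apply_of,
      FreeGroup.lift_apply_of]
    decide
  refine le_antisymm hle fun x hx => ?_
  rcases mem_or_forall_of_mul_mem x with h | h
  · exact h
  · obtain ⟨s⟩ := ‹Nonempty S›
    have hs := (Subgroup.mul_mem_cancel_right _ hx).mp (hle (h s))
    rw [MonoidHom.mem_ker, FreeGroup.lift_apply_of] at hs
    exact absurd hs (by decide)
end

section
/- Fix a real density d with 1/6 < d < 1. Then the sequence of ratios of binomial coefficients m ↦ ((m^6 − m^5).choose ⌈(m:ℝ)^(6d)⌉₊ : ℝ) / ((m^6).choose ⌈(m:ℝ)^(6d)⌉₊ : ℝ) tends to 0 as the natural number m → ∞. -/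
/-!
A random `k`-subset of a `b`-element set avoids a fixed subset with complement of size `a` with
probability `choose a k / choose b k ≤ (a / b) ^ k`, since each factor `(a - i) / (b - i)` is at
most `a / b`. With `a = m ^ 6 - m ^ 5` and `b = m ^ 6` this is `(1 - 1 / m) ^ k ≤ exp (-k / m)`,
and for `k = ⌈m ^ (6 d)⌉` the exponent satisfies `k / m ≥ m ^ (6 d - 1) → ∞` because `6 d > 1`.
-/

lemma descFactorial_mul_pow_le {a b : ℕ} (h : a ≤ b) (k : ℕ) :
    a.descFactorial k * b ^ k ≤ b.descFactorial k * a ^ k := by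
  induction k with
  | zero => simp
  | succ k ih =>
    have h1 : (a - k) * b ≤ (b - k) * a := by
      rw [Nat.sub_mul, Nat.sub_mul, Nat.mul_comm b a]
      exact Nat.sub_le_sub_left (Nat.mul_le_mul_left k h) _
    calc a.descFactorial (k + 1) * b ^ (k + 1)
        = ((a - k) * b) * (a.descFactorial k * b ^ k) := by
          rw [Nat.descFactorial_succ]; ring
      _ ≤ ((b - k) * a) * (b.descFactorial k * a ^ k) := Nat.mul_le_mul h1 ih
      _ = b.descFactorial (k + 1) * a ^ (k + 1) := by
          rw [Nat.descFactorial_succ]; ring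

lemma choose_div_choose_le_pow {a b : ℕ} (h : a ≤ b) (hb : 0 < b) (k : ℕ) :
    (a.choose k : ℝ) / (b.choose k : ℝ) ≤ ((a : ℝ) / b) ^ k := by
  -- For `k > b` the denominator vanishes and the quotient is `0` by convention.
  rcases Nat.eq_zero_or_pos (b.choose k) with h0 | h0
  · rw [h0, Nat.cast_zero, div_zero]
    positivity
  · have hnat : a.choose k * b ^ k ≤ b.choose k * a ^ k := by
      have h1 := descFactorial_mul_pow_le h k
      rw [Nat.descFactorial_eq_factorial_mul_choose, Nat.descFactorial_eq_factorial_mul_choose,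
        Nat.mul_assoc, Nat.mul_assoc] at h1
      exact Nat.le_of_mul_le_mul_left h1 k.factorial_pos
    have hb' : (0 : ℝ) < b := by exact_mod_cast hb
    have h0' : (0 : ℝ) < (b.choose k : ℝ) := by exact_mod_cast h0
    rw [div_pow, div_le_div_iff₀ h0' (by positivity), mul_comm ((a : ℝ) ^ k)]
    exact_mod_cast hnat

/-- For density `1/6 < d < 1`, the ratio
`choose (m^6 - m^5) ⌈m^(6d)⌉ / choose (m^6) ⌈m^(6d)⌉` tends to `0`. -/
theorem tendsto_choose_ratio_zero (d : ℝ) (hd1 : 1 / 6 < d) (hd2 : d < 1) :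
    Filter.Tendsto (fun m : ℕ =>
        (((m ^ 6 - m ^ 5).choose ⌈(m : ℝ) ^ (6 * d)⌉₊ : ℝ)) /
          (((m ^ 6).choose ⌈(m : ℝ) ^ (6 * d)⌉₊ : ℝ)))
      Filter.atTop (nhds 0) := by
  have hlim : Filter.Tendsto (fun m : ℕ => Real.exp (-((m : ℝ) ^ (6 * d - 1))))
      Filter.atTop (nhds 0) :=
    Real.tendsto_exp_neg_atTop_nhds_zero.comp
      ((tendsto_rpow_atTop (by linarith)).comp tendsto_natCast_atTop_atTop)
  refine squeeze_zero' (Filter.Eventually.of_forall fun m => by positivity) ?_ hlim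
  filter_upwards [Filter.eventually_ge_atTop 1] with m hm
  have hm0 : (0 : ℝ) < m := by exact_mod_cast hm
  have hle : m ^ 5 ≤ m ^ 6 := Nat.pow_le_pow_right hm (by norm_num)
  set k := ⌈(m : ℝ) ^ (6 * d)⌉₊ with hk
  have hratio : ((m ^ 6 - m ^ 5 : ℕ) : ℝ) / ((m ^ 6 : ℕ) : ℝ) = 1 - 1 / m := by
    rw [Nat.cast_sub hle]
    push_cast
    field_simp
  calc ((m ^ 6 - m ^ 5).choose k : ℝ) / ((m ^ 6).choose k : ℝ)
      ≤ (((m ^ 6 - m ^ 5 : ℕ) : ℝ) / ((m ^ 6 : ℕ) : ℝ)) ^ k :=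
        choose_div_choose_le_pow (Nat.sub_le _ _) (by positivity) k
    _ ≤ Real.exp (-(1 / m)) ^ k := by
        refine pow_le_pow_left₀ (by positivity) ?_ k
        rw [hratio]
        exact Real.one_sub_le_exp_neg _
    _ = Real.exp (-(k / m)) := by
        rw [← Real.exp_nat_mul]
        congr 1
        ring
    _ ≤ Real.exp (-((m : ℝ) ^ (6 * d - 1))) := by
        rw [Real.exp_le_exp, neg_le_neg_iff, Real.rpow_sub_one hm0.ne']
        exact div_le_div_of_nonneg_right (Nat.le_ceil _) hm0.le
end

section
/- Fix a real density d with 1/6 < d < 1/3. For each natural number n let W_n be the finite set of cyclically reduced words of length 6 over n generators, let A_n ⊆ W_n be the subset of words w with w(0) = w(3) (two equal antipodal letters), and let K_n = ⌈(2n − 1 : ℝ)^(6d)⌉₊. Then the proportion of K_n-element subsets of W_n that are disjoint from A_n, namely ((|W_n| − |A_n|).choose K_n : ℝ) / (|W_n|.choose K_n : ℝ), tends to 0 as n → ∞. In other words, with overwhelming probability a uniformly random set of ⌈(2n−1)^{6d}⌉ cyclically reduced length-6 relators contains a relator with two equal antipodal letters. -/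
/-!
A uniformly random `K`-subset of a set of size `N` avoids a given subset of size `a` with
probability at most `(1 - a / N) ^ K ≤ exp (-(K * a / N))` (`choose_mul_pow_le`,
`choose_ratio_le_exp`). Here `N = |W_n| ≤ (2n)^6` trivially, while `a = |A_n| ≥ n^5`: a word using
only positive letters is cyclically reduced, and its letters at positions `0, 1, 2, 4, 5` can be
chosen freely once the letter at position `3` copies the one at position `0`
(`pow_five_le_card_antipodal`). Since `K ≥ n^(6d)`, the exponent `K * a / N` is at least
`n^(6d - 1) / 64`, which tends to infinity because `d > 1/6`.
-/

/-- A word of length 6 over `n` generators is cyclically reduced if no two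
cyclically adjacent letters are mutually inverse. -/
def CyclicallyReduced6 (n : ℕ) (w : Fin 6 → Fin n × Bool) : Prop :=
  ∀ j : Fin 6, w (j + 1) ≠ ((w j).1, !(w j).2)

instance (n : ℕ) : DecidablePred (CyclicallyReduced6 n) := fun w => by
  unfold CyclicallyReduced6; infer_instance

/-- The integer form of `choose M K / choose N K ≤ (M / N) ^ K`; each factor `(M - k) / (N - k)`
of the left side is at most `M / N`. -/
lemma choose_mul_pow_le {M N : ℕ} (h : M ≤ N) (K : ℕ) :
    M.choose K * N ^ K ≤ M ^ K * N.choose K := by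
  induction K with
  | zero => simp
  | succ k ih =>
    have key : (M - k) * N ≤ M * (N - k) := by
      rw [Nat.sub_mul, Nat.mul_sub]
      have : M * k ≤ k * N := by rw [mul_comm]; exact Nat.mul_le_mul_left k h
      omega
    refine Nat.le_of_mul_le_mul_right ?_ (Nat.succ_pos k)
    calc M.choose (k + 1) * N ^ (k + 1) * (k + 1)
        = (M.choose (k + 1) * (k + 1)) * N ^ (k + 1) := by ring
      _ = (M.choose k * N ^ k) * ((M - k) * N) := by
          rw [Nat.choose_succ_right_eq]; ring
      _ ≤ (M ^ k * N.choose k) * (M * (N - k)) := Nat.mul_le_mul ih key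
      _ = M ^ (k + 1) * (N.choose k * (N - k)) := by ring
      _ = M ^ (k + 1) * N.choose (k + 1) * (k + 1) := by
          rw [← Nat.choose_succ_right_eq]; ring

lemma choose_ratio_le_exp {N a : ℕ} (ha : a ≤ N) (hN : 0 < N) (K : ℕ) :
    ((N - a).choose K : ℝ) / (N.choose K : ℝ) ≤ Real.exp (-((K : ℝ) * (a / N))) := by
  have hN' : (0 : ℝ) < N := by exact_mod_cast hN
  -- For `K > N` the denominator vanishes and the quotient is `0`.
  rcases Nat.eq_zero_or_pos (N.choose K) with h0 | hpos
  · simp only [h0, Nat.cast_zero, div_zero]; positivity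
  have hpos' : (0 : ℝ) < N.choose K := by exact_mod_cast hpos
  have h1 : ((N - a).choose K : ℝ) * (N : ℝ) ^ K ≤ ((N - a : ℕ) : ℝ) ^ K * N.choose K := by
    exact_mod_cast choose_mul_pow_le (Nat.sub_le N a) K
  calc ((N - a).choose K : ℝ) / (N.choose K : ℝ) ≤ (((N - a : ℕ) : ℝ) / N) ^ K := by
        rw [div_pow, div_le_div_iff₀ hpos' (by positivity)]; exact h1
    _ ≤ (Real.exp (-((a : ℝ) / N))) ^ K := by
        refine pow_le_pow_left₀ (by positivity) ?_ K
        rw [Nat.cast_sub ha, sub_div, div_self hN'.ne']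
        have := Real.add_one_le_exp (-((a : ℝ) / N))
        linarith
    _ = Real.exp (-((K : ℝ) * (a / N))) := by
        rw [← Real.exp_nat_mul]; congr 1; ring

lemma pow_five_le_card_antipodal (n : ℕ) :
    n ^ 5 ≤ (Finset.univ.filter fun w : Fin 6 → Fin n × Bool =>
      CyclicallyReduced6 n w ∧ w 0 = w 3).card := by
  have hc : (Finset.univ : Finset (Fin 5 → Fin n)).card = n ^ 5 := by simp
  rw [← hc]
  -- The positive word with letters `f 0, f 1, f 2, f 0, f 3, f 4`.
  refine Finset.card_le_card_of_injOn
    (fun f j => (f ((![0, 1, 2, 0, 3, 4] : Fin 6 → Fin 5) j), true)) ?_ ?_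
  · intro f _
    refine Finset.mem_coe.mpr (Finset.mem_filter.mpr ⟨Finset.mem_univ _, fun j => ?_, rfl⟩)
    simp
  · intro f _ g _ hfg
    funext i
    have h := fun j => congrArg Prod.fst (congrFun hfg j)
    fin_cases i
    · exact h 0
    · exact h 1
    · exact h 2
    · exact h 4
    · exact h 5

lemma card_filter_words_le (n : ℕ) :
    (Finset.univ.filter fun w : Fin 6 → Fin n × Bool => CyclicallyReduced6 n w).card
      ≤ (2 * n) ^ 6 := by
  refine (Finset.card_filter_le _ _).trans (le_of_eq ?_)
  simp [mul_comm]

/-- In the hexagonal model at density `1/6 < d < 1/3`, the proportion of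
`⌈(2n-1)^(6d)⌉`-element sets of cyclically reduced length-6 relators avoiding
all relators with two equal antipodal letters tends to `0`. -/
theorem tendsto_proportion_avoiding_antipodal_zero (d : ℝ)
    (hd1 : 1 / 6 < d) (hd2 : d < 1 / 3) :
    Filter.Tendsto (fun n : ℕ =>
        let W := Finset.univ.filter fun w : Fin 6 → Fin n × Bool =>
          CyclicallyReduced6 n w
        let A := Finset.univ.filter fun w : Fin 6 → Fin n × Bool =>
          CyclicallyReduced6 n w ∧ w 0 = w 3
        let K := ⌈(2 * (n : ℝ) - 1) ^ (6 * d)⌉₊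
        (((W.card - A.card).choose K : ℝ)) / ((W.card.choose K : ℝ)))
      Filter.atTop (nhds 0) := by
  have hlim : Filter.Tendsto (fun n : ℕ => Real.exp (-((n : ℝ) ^ (6 * d - 1) / 64)))
      Filter.atTop (nhds 0) := by
    refine Real.tendsto_exp_neg_atTop_nhds_zero.comp ?_
    refine Filter.Tendsto.atTop_div_const (by norm_num) ?_
    exact (tendsto_rpow_atTop (by linarith)).comp tendsto_natCast_atTop_atTop
  refine squeeze_zero' (Filter.Eventually.of_forall fun n => by positivity) ?_ hlim
  filter_upwards [Filter.eventually_ge_atTop 1] with n hn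
  extract_lets W A K
  have hAW : A.card ≤ W.card :=
    Finset.card_le_card (Finset.monotone_filter_right _ fun w _ h => h.1)
  have hA : n ^ 5 ≤ A.card := pow_five_le_card_antipodal n
  have hW : W.card ≤ (2 * n) ^ 6 := card_filter_words_le n
  have hWpos : 0 < W.card := (Nat.pow_pos hn).trans_le (hA.trans hAW)
  refine (choose_ratio_le_exp hAW hWpos K).trans ?_
  have hn1 : (1 : ℝ) ≤ n := by exact_mod_cast hn
  have hn0 : (0 : ℝ) < n := by linarith
  have hK : (n : ℝ) ^ (6 * d) ≤ K :=
    (Real.rpow_le_rpow hn0.le (by linarith) (by linarith)).trans (Nat.le_ceil _)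
  have hA' : (n : ℝ) ^ 5 ≤ A.card := by exact_mod_cast hA
  have hW' : (W.card : ℝ) ≤ (2 * n) ^ 6 := by exact_mod_cast hW
  have hWpos' : (0 : ℝ) < W.card := by exact_mod_cast hWpos
  have hfrac : 1 / (64 * (n : ℝ)) ≤ (A.card : ℝ) / W.card := by
    calc 1 / (64 * (n : ℝ)) = (n : ℝ) ^ 5 / (2 * n) ^ 6 := by field_simp; norm_num
      _ ≤ (A.card : ℝ) / W.card := div_le_div₀ (by positivity) hA' hWpos' hW'
  refine Real.exp_le_exp.mpr (neg_le_neg ?_)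
  calc (n : ℝ) ^ (6 * d - 1) / 64 = (n : ℝ) ^ (6 * d) * (1 / (64 * (n : ℝ))) := by
        rw [Real.rpow_sub_one hn0.ne']; field_simp
    _ ≤ K * ((A.card : ℝ) / W.card) :=
        mul_le_mul hK hfrac (by positivity) (by positivity)
end
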